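/- Under assumptions (1), (2), (3) on the quadratic integrals of the geodesic flow, for almost every x ∈ U (with respect to Lebesgue measure on ℝⁿ) the set of coefficient vectors (λ_2, …, λ_n) ∈ ℝ^{n−1} for which the n×n matrix (∑_{α=2}^n λ_α K_α(x)) · G(x)⁻¹ has n pairwise distinct real eigenvalues (equivalently, its characteristic polynomial has n distinct real roots) is open and dense in ℝ^{n−1}. -/

import Mathlib

open MeasureTheory Matrix Polynomial

/-- The canonical Poisson bracket on the phase space `(Fin n → ℝ) × (Fin n → ℝ)`
with coordinates `(x, p)`. -/
noncomputable def poisson {n : ℕ} (f h : (Fin n → ℝ) × (Fin n → ℝ) → ℝ)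
    (z : (Fin n → ℝ) × (Fin n → ℝ)) : ℝ :=
  ∑ i : Fin n,
    (fderiv ℝ f z (Pi.single i 1, 0) * fderiv ℝ h z (0, Pi.single i 1)
      - fderiv ℝ f z (0, Pi.single i 1) * fderiv ℝ h z (Pi.single i 1, 0))

/-!
Let `W` be the span of the Killing tensors `K_α`. If a Killing tensor `T` has vanishing 2-jet at one
point, then `T = 0`: the Killing equation expresses the third derivatives of `T` through lower ones,
so `T` and its first and second derivatives generate a finitely generated differential ideal, whose
zero set is closed, and open by uniqueness for linear ODEs along segments.

The differential of a smooth function vanishes at almost every point of its zero set. Applied to the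
minors of a matrix of smooth functions this shows that, for almost every `x`, the derivatives at `x`
of any `T ∈ W` with `T(x) = 0` are values at `x` of elements of `W`, hence diagonal in the common
frame. In that frame the Killing equation reads `∑ Wᵢⱼ qᵢ qⱼ² = 0`, which forces `Wᵢⱼ = 0`, so the
1-jet of `T` vanishes at `x`. Moreover `∂ₐT` has the same 1-jet at `x` as some element of `W`, to
which the same argument applies, so the 2-jet of `T` vanishes as well and `T = 0`.

Thus linear independence of the `K_α` passes to `K_α(x)` for almost every `x`. Then `n` independent
simultaneously diagonal matrices span all diagonal matrices, and two eigenvalues of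
`∑ λ_α K_α(x) G(x)⁻¹` coincide only on a hyperplane of coefficients.
-/

section SmoothFunctions

open TopologicalSpace

/-- The extension by zero of a function on a subtype; it gives access to the calculus of functions
on a normed space. -/
noncomputable def zeroExtend {α : Type*} {p : α → Prop} (f : Subtype p → ℝ) : α → ℝ :=
  Function.extend Subtype.val f 0

@[simp]
theorem zeroExtend_apply {α : Type*} {p : α → Prop} (f : Subtype p → ℝ) (x : Subtype p) :
    zeroExtend f x = f x :=
  Subtype.val_injective.extend_apply f 0 x

variable {E : Type*} [NormedAddCommGroup E] [NormedSpace ℝ E] {U : Opens E}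

variable (U) in
/-- The algebra of smooth functions on the open set `U`. Its elements are functions on the subtype,
so that equality in the algebra is equality on `U`. -/
def smoothFunctions : Subalgebra ℝ (U → ℝ) where
  carrier := {f | ContDiffOn ℝ (⊤ : ℕ∞) (zeroExtend f) U}
  mul_mem' hf hg := (hf.mul hg).congr fun x hx => by
    lift x to U using hx; simp only [zeroExtend_apply, Pi.mul_apply]
  add_mem' hf hg := (hf.add hg).congr fun x hx => by
    lift x to U using hx; simp only [zeroExtend_apply, Pi.add_apply]
  algebraMap_mem' c := (contDiffOn_const (c := c)).congr fun x hx => by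
    lift x to U using hx; simp only [zeroExtend_apply]; rfl

theorem restrict_mem_smoothFunctions {g : E → ℝ} (hg : ContDiffOn ℝ (⊤ : ℕ∞) g U) :
    (fun x : U => g x) ∈ smoothFunctions U :=
  hg.congr fun x hx => zeroExtend_apply _ (⟨x, hx⟩ : U)

theorem differentiableAt_zeroExtend (f : smoothFunctions U) (x : U) :
    DifferentiableAt ℝ (zeroExtend f.1) x :=
  (f.2.contDiffAt (U.isOpen.mem_nhds x.2)).differentiableAt (by simp)

/-- Evaluation of smooth functions at a point. -/
def evalAt (x : U) : smoothFunctions U →ₐ[ℝ] ℝ :=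
  (Pi.evalAlgHom ℝ (fun _ : U => ℝ) x).comp (smoothFunctions U).val

theorem evalAt_apply (x : U) (f : smoothFunctions U) : evalAt x f = f.1 x :=
  rfl

theorem zeroExtend_eq_evalAt (f : smoothFunctions U) (x : U) : zeroExtend f.1 x = evalAt x f :=
  zeroExtend_apply f.1 x

theorem ext_evalAt {f g : smoothFunctions U} (h : ∀ x, evalAt x f = evalAt x g) : f = g :=
  Subtype.ext (funext h)

theorem isUnit_of_evalAt_ne_zero {f : smoothFunctions U} (hf : ∀ x, evalAt x f ≠ 0) :
    IsUnit f := by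
  have hinv : ContDiffOn ℝ (⊤ : ℕ∞) (zeroExtend f.1)⁻¹ U :=
    f.2.inv fun x hx => by lift x to U using hx; simpa only [zeroExtend_eq_evalAt] using hf x
  refine .of_mul_eq_one ⟨_, restrict_mem_smoothFunctions hinv⟩ (ext_evalAt fun x => ?_)
  simp only [map_mul, map_one, evalAt_apply, Pi.inv_apply, zeroExtend_apply]
  exact mul_inv_cancel₀ (hf x)

theorem isUnit_of_isUnit_map_evalAt {ι : Type*} [Fintype ι] [DecidableEq ι]
    {M : Matrix ι ι (smoothFunctions U)} (hM : ∀ x, IsUnit (M.map (evalAt x))) : IsUnit M := by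
  refine (isUnit_iff_isUnit_det M).2 (isUnit_of_evalAt_ne_zero fun x => ?_)
  rw [AlgHom.map_det]
  exact ((isUnit_iff_isUnit_det _).1 (hM x)).ne_zero

theorem fderiv_zeroExtend_mem_smoothFunctions (f : smoothFunctions U) (w : E) :
    (fun x : U => fderiv ℝ (zeroExtend f.1) x w) ∈ smoothFunctions U :=
  restrict_mem_smoothFunctions
    ((f.2.fderiv_of_isOpen U.isOpen (m := (⊤ : ℕ∞)) (by simp)).clm_apply contDiffOn_const)

theorem fderiv_zeroExtend_congr {f : U → ℝ} {g : E → ℝ} (h : ∀ x : U, f x = g x) (x : U) :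
    fderiv ℝ (zeroExtend f) x = fderiv ℝ g x :=
  Filter.EventuallyEq.fderiv_eq <| Filter.eventuallyEq_of_mem (U.isOpen.mem_nhds x.2)
    fun y hy => (zeroExtend_apply f ⟨y, hy⟩).trans (h ⟨y, hy⟩)

variable (U) in
/-- The derivative of smooth functions on `U` in the direction of a vector, as a derivation of the
algebra of smooth functions. -/
noncomputable def dirDeriv : E →ₗ[ℝ] Derivation ℝ (smoothFunctions U) (smoothFunctions U) where
  toFun w := Derivation.mk'
    { toFun f := ⟨_, fderiv_zeroExtend_mem_smoothFunctions f w⟩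
      map_add' f g := ext_evalAt fun x => by
        simp only [map_add, evalAt_apply]
        rw [fderiv_zeroExtend_congr (g := zeroExtend f.1 + zeroExtend g.1)
          (fun y => by simp), fderiv_add (differentiableAt_zeroExtend f x)
          (differentiableAt_zeroExtend g x)]
        rfl
      map_smul' c f := ext_evalAt fun x => by
        simp only [map_smul, evalAt_apply, RingHom.id_apply]
        rw [fderiv_zeroExtend_congr (g := c • zeroExtend f.1) (fun y => by simp),
          fderiv_const_smul (differentiableAt_zeroExtend f x)]
        rfl }
    fun f g => ext_evalAt fun x => by
      simp only [map_add, evalAt_apply, smul_eq_mul, map_mul, LinearMap.coe_mk, AddHom.coe_mk]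
      rw [fderiv_zeroExtend_congr (g := zeroExtend f.1 * zeroExtend g.1) (fun y => by simp),
        fderiv_mul (differentiableAt_zeroExtend f x) (differentiableAt_zeroExtend g x)]
      simp
  map_add' v w := Derivation.ext fun f => ext_evalAt fun x => by simp [evalAt_apply]
  map_smul' c w := Derivation.ext fun f => ext_evalAt fun x => by simp [evalAt_apply]

theorem evalAt_dirDeriv (w : E) (f : smoothFunctions U) (x : U) :
    evalAt x (dirDeriv U w f) = fderiv ℝ (zeroExtend f.1) x w :=
  rfl

theorem dirDeriv_comm (v w : E) (f : smoothFunctions U) :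
    dirDeriv U v (dirDeriv U w f) = dirDeriv U w (dirDeriv U v f) := by
  refine ext_evalAt fun x => ?_
  have hf : ContDiffAt ℝ (⊤ : ℕ∞) (zeroExtend f.1) x := f.2.contDiffAt (U.isOpen.mem_nhds x.2)
  have hdiff : DifferentiableAt ℝ (fderiv ℝ (zeroExtend f.1)) x :=
    (hf.fderiv_right (m := 1) (by norm_cast)).differentiableAt one_ne_zero
  have second_deriv (v w : E) : evalAt x (dirDeriv U v (dirDeriv U w f)) =
      fderiv ℝ (fderiv ℝ (zeroExtend f.1)) x v w := by
    rw [evalAt_dirDeriv, fderiv_zeroExtend_congr (f := (dirDeriv U w f).1)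
      (g := fun y => fderiv ℝ (zeroExtend f.1) y w) (evalAt_dirDeriv w f),
      fderiv_clm_apply hdiff (by fun_prop)]
    simp
  have hsymm : IsSymmSndFDerivAt ℝ (zeroExtend f.1) x := hf.isSymmSndFDerivAt (by
    rw [minSmoothness_of_isRCLikeNormedField]
    exact WithTop.coe_le_coe.2 (le_top (a := (2 : ℕ∞))))
  rw [second_deriv, second_deriv, hsymm v w]

theorem lie_dirDeriv (v w : E) : ⁅dirDeriv U v, dirDeriv U w⁆ = 0 :=
  Derivation.ext fun f => by
    rw [Derivation.commutator_apply, dirDeriv_comm, sub_self]; rfl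

end SmoothFunctions

section BorderedMinors

variable {ι κ ν : Type*} [Fintype ν] [DecidableEq ν]

/-- The matrix whose `(i, j)` entry is the minor of `P` with rows `s, i` and columns `t, j`,
expanded along its last row and column. It vanishes if the rows `s` of `P` span all rows. -/
def borderedMinors {A : Type*} [CommRing A] (P : Matrix ι κ A) (s : ν → ι) (t : ν → κ) :
    Matrix ι κ A :=
  (P.submatrix s t).det • P - P.submatrix id t * (P.submatrix s t).adjugate * P.submatrix s id

theorem borderedMinors_map {A B : Type*} [CommRing A] [CommRing B] (φ : A →+* B)
    (P : Matrix ι κ A) (s : ν → ι) (t : ν → κ) :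
    borderedMinors (P.map φ) s t = (borderedMinors P s t).map φ := by
  simp only [borderedMinors, Matrix.map_sub φ (map_sub φ), Matrix.map_mul, ← submatrix_map,
    ← RingHom.mapMatrix_apply φ (adjugate _), RingHom.map_adjugate]
  rw [RingHom.mapMatrix_apply, Matrix.map_smulₛₗ φ φ _ fun a => map_mul φ _ a, RingHom.map_det]
  rfl

theorem borderedMinors_eq_zero {A : Type*} [CommRing A] {P : Matrix ι κ A} {s : ν → ι}
    {C : Matrix ι ν A} (hP : P = C * P.submatrix s id) (t : ν → κ) :
    borderedMinors P s t = 0 := by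
  have hcols : P.submatrix id t = C * P.submatrix s t := by
    conv_lhs => rw [hP]
    rfl
  rw [borderedMinors, hcols, Matrix.mul_assoc C, mul_adjugate, Matrix.mul_smul, Matrix.mul_one,
    Matrix.smul_mul, ← hP, sub_self]

theorem exists_isUnit_submatrix_and_eq_mul_submatrix {K : Type*} [Field K] [Finite κ]
    (P : Matrix ι κ K) :
    ∃ (r : ℕ) (s : Fin r → ι) (t : Fin r → κ) (C : Matrix ι (Fin r) K),
      IsUnit (P.submatrix s t) ∧ P = C * P.submatrix s id := by
  cases nonempty_fintype κ
  obtain ⟨f, hf, hspan, hli⟩ := Submodule.exists_fun_fin_finrank_span_eq K (Set.range P.row)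
  choose s hs using hf
  obtain rfl : f = (P.submatrix s id).row := funext fun a => (hs a).symm
  obtain ⟨g, hg, -, hgli⟩ :=
    Submodule.exists_fun_fin_finrank_span_eq K (Set.range (P.submatrix s id).col)
  choose t ht using hg
  obtain rfl : g = (P.submatrix s t).col := funext fun a => (ht a).symm
  have hcard := rank_eq_finrank_span_cols (P.submatrix s id)
  rw [hli.rank_matrix, Fintype.card_fin] at hcard
  have hmem (i : ι) : P.row i ∈ Submodule.span K (Set.range (P.submatrix s id).row) :=
    hspan.ge (Submodule.subset_span ⟨i, rfl⟩)
  choose C hC using fun i => (Submodule.mem_span_range_iff_exists_fun K).1 (hmem i)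
  refine ⟨_, s, t ∘ finCongr hcard, of C, ?_, ?_⟩
  · exact linearIndependent_cols_iff_isUnit.1 (hgli.comp _ (finCongr hcard).injective)
  · ext i j
    simpa [mul_apply, eq_comm] using congrFun (hC i) j

variable [Fintype κ] {R A F : Type*} [CommRing R] [CommRing A] [Algebra R A] [Field F]

theorem map_derivation_mul (D : Derivation R A A) (φ : A →+* F) (M : Matrix ι κ A)
    {ρ : Type*} (N : Matrix κ ρ A) :
    (M * N).map (φ ∘ D) =
      M.map (φ ∘ D) * N.map φ + M.map φ * N.map (φ ∘ D) := by
  ext i j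
  simp only [mul_apply, map_apply, Matrix.add_apply, Function.comp_apply, map_sum,
    Derivation.leibniz, smul_eq_mul, map_add, map_mul, ← Finset.sum_add_distrib]
  exact Finset.sum_congr rfl fun k _ => by ring

/-- Differentiating `det(P_st) P = P_t adj(P_st) P_s` and applying the result to a vector `c` in the
kernel of `P` leaves `det(P_st) (∂P) c = P_t adj(P_st) (∂P_s) c`. -/
theorem exists_mulVec_eq_derivation_mulVec (D : Derivation R A A) (φ : A →+* F)
    (P : Matrix ι κ A) {s : ν → ι} {t : ν → κ} (hdet : φ (P.submatrix s t).det ≠ 0)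
    (hP : (borderedMinors P s t).map (φ ∘ D) = 0) {c : κ → F} (hc : P.map φ *ᵥ c = 0) :
    ∃ c', P.map (φ ∘ D) *ᵥ c = P.map φ *ᵥ c' := by
  classical
  set δ := (P.submatrix s t).det
  set Q := P.submatrix id t * (P.submatrix s t).adjugate with hQ
  have hleibniz : φ δ • P.map (φ ∘ D) + φ (D δ) • P.map φ =
      Q.map (φ ∘ D) * (P.submatrix s id).map φ + Q.map φ * (P.submatrix s id).map (φ ∘ D) := by
    rw [← map_derivation_mul, ← sub_eq_zero, ← hP]
    ext i j
    simp only [borderedMinors, ← hQ, Matrix.sub_apply, Matrix.add_apply, Matrix.smul_apply,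
      map_apply, smul_eq_mul, Function.comp_apply, map_sub, Derivation.leibniz, map_add, map_mul, δ]
    ring
  have hker : (P.submatrix s id).map φ *ᵥ c = 0 := funext fun a => congrFun hc (s a)
  have hcols : Q.map φ = P.map φ *
      ((1 : Matrix κ κ F).submatrix id t * (P.submatrix s t).adjugate.map φ) := by
    rw [← Matrix.mul_assoc, Matrix.map_mul]
    congr 1
    exact (mul_submatrix_one (Equiv.refl κ) t (P.map φ)).symm
  refine ⟨(φ δ)⁻¹ • ((1 : Matrix κ κ F).submatrix id t * (P.submatrix s t).adjugate.map φ) *ᵥ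
    (P.submatrix s id).map (φ ∘ D) *ᵥ c, ?_⟩
  have hvec := congrArg (· *ᵥ c) hleibniz
  simp only [add_mulVec, smul_mulVec, ← mulVec_mulVec, hc, hker, mulVec_zero, smul_zero, add_zero,
    zero_add, hcols] at hvec
  rw [mulVec_smul, ← mulVec_mulVec, ← hvec, inv_smul_smul₀ hdet]

end BorderedMinors

section AlmostEverywhere

open TopologicalSpace

variable {E : Type*} [NormedAddCommGroup E] [NormedSpace ℝ E] [FiniteDimensional ℝ E]
  [MeasurableSpace E] [BorelSpace E] {μ : Measure E} [μ.IsAddHaarMeasure]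

theorem ae_hasFDerivWithinAt_eq_zero_of_const {f : E → ℝ} {f' : E → E →L[ℝ] ℝ} {s : Set E} {c : ℝ}
    (hs : MeasurableSet s) (hf' : ∀ x ∈ s, HasFDerivWithinAt f (f' x) s x)
    (hc : ∀ x ∈ s, f x = c) : ∀ᵐ x ∂μ.restrict s, f' x = 0 := by
  nontriviality E
  obtain ⟨w, hw⟩ := exists_ne (0 : E)
  have hconst : ApproximatesLinearOn (fun x => f x • w) (0 : E →L[ℝ] E) s 0 := fun x hx y hy => by
    simp [hc x hx, hc y hy]
  filter_upwards [hconst.norm_fderiv_sub_le μ hs (fun x => (f' x).smulRight w)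
    fun x hx => (hf' x hx).smul_const w] with x hx
  simpa [hw] using hx

theorem ae_dirDeriv_eq_zero {U : Opens E} (f : smoothFunctions U) (w : E) :
    ∀ᵐ x ∂μ, ∀ hx : x ∈ U, evalAt ⟨x, hx⟩ f = 0 → evalAt ⟨x, hx⟩ (dirDeriv U w f) = 0 := by
  have hopen : IsOpen (U ∩ zeroExtend f.1 ⁻¹' {0}ᶜ) :=
    f.2.continuousOn.isOpen_inter_preimage U.isOpen isOpen_compl_singleton
  have hs : MeasurableSet ((U : Set E) \ (U ∩ zeroExtend f.1 ⁻¹' {0}ᶜ)) :=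
    U.isOpen.measurableSet.diff hopen.measurableSet
  have hzero := ae_hasFDerivWithinAt_eq_zero_of_const (μ := μ) (c := 0) hs
    (fun x hx => (differentiableAt_zeroExtend f ⟨x, hx.1⟩).hasFDerivAt.hasFDerivWithinAt)
    (fun x hx => by simpa [hx.1] using hx.2)
  filter_upwards [(ae_restrict_iff' hs).1 hzero] with x hx hxU h0
  rw [evalAt_dirDeriv, hx ⟨hxU, fun h => h.2 ?_⟩, _root_.zero_apply]
  exact (zeroExtend_eq_evalAt f ⟨x, hxU⟩).trans h0

theorem ae_exists_mulVec_eq_dirDeriv_mulVec {U : Opens E} {ι κ : Type*} [Finite ι] [Fintype κ]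
    (P : Matrix ι κ (smoothFunctions U)) (w : E) :
    ∀ᵐ x ∂μ, ∀ hx : x ∈ U, ∀ c, P.map (evalAt ⟨x, hx⟩) *ᵥ c = 0 →
      ∃ c', P.map (evalAt ⟨x, hx⟩ ∘ dirDeriv U w) *ᵥ c = P.map (evalAt ⟨x, hx⟩) *ᵥ c' := by
  have hae : ∀ᵐ x ∂μ, ∀ (q : Σ r : ℕ, (Fin r → ι) × (Fin r → κ)) (i : ι) (j : κ) (hx : x ∈ U),
      evalAt ⟨x, hx⟩ (borderedMinors P q.2.1 q.2.2 i j) = 0 →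
        evalAt ⟨x, hx⟩ (dirDeriv U w (borderedMinors P q.2.1 q.2.2 i j)) = 0 := by
    simp only [ae_all_iff (ι := Sigma _), ae_all_iff (ι := ι), ae_all_iff (ι := κ)]
    exact fun q i j => ae_dirDeriv_eq_zero _ w
  filter_upwards [hae] with x hae hx c hc
  obtain ⟨r, s, t, C, hunit, hC⟩ :=
    exists_isUnit_submatrix_and_eq_mul_submatrix (P.map (evalAt ⟨x, hx⟩))
  refine exists_mulVec_eq_derivation_mulVec (s := s) (t := t) (dirDeriv U w)
    (evalAt ⟨x, hx⟩ : smoothFunctions U →+* ℝ) P ?_ ?_ hc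
  · rw [RingHom.map_det]
    exact ((isUnit_iff_isUnit_det _).1 hunit).ne_zero
  · ext i j
    refine hae ⟨r, s, t⟩ i j hx ?_
    have hmap := borderedMinors_map (evalAt ⟨x, hx⟩ : smoothFunctions U →+* ℝ) P s t
    exact congrFun₂ (hmap.symm.trans (borderedMinors_eq_zero hC t)) i j

theorem ae_exists_eval_eq_dirDeriv {U : Opens E} {ι V : Type*} [Finite ι] [AddCommGroup V]
    [Module ℝ V] [FiniteDimensional ℝ V] (L : V →ₗ[ℝ] ι → smoothFunctions U) (w : E) :
    ∀ᵐ x ∂μ, ∀ hx : x ∈ U, ∀ v, (∀ i, evalAt ⟨x, hx⟩ (L v i) = 0) →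
      ∃ v', ∀ i, evalAt ⟨x, hx⟩ (dirDeriv U w (L v i)) = evalAt ⟨x, hx⟩ (L v' i) := by
  let b := Module.finBasis ℝ V
  let P : Matrix ι _ (smoothFunctions U) := of fun i k => L (b k) i
  filter_upwards [ae_exists_mulVec_eq_dirDeriv_mulVec P w] with x hae hx v hv
  have eval_eq (ψ : smoothFunctions U →ₗ[ℝ] ℝ) (v : V) (i : ι) :
      ψ (L v i) = (P.map ψ *ᵥ b.repr v) i := by
    conv_lhs => rw [← b.sum_repr v, map_sum, Finset.sum_apply, map_sum]
    exact Finset.sum_congr rfl fun k _ => by simp [P, mul_comm]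
  obtain ⟨c', hc'⟩ := hae hx (b.repr v)
    (funext fun i => (eval_eq (evalAt ⟨x, hx⟩).toLinearMap v i).symm.trans (hv i))
  refine ⟨b.equivFun.symm c', fun i => ?_⟩
  have hv' : ⇑(b.repr (b.equivFun.symm c')) = c' := b.equivFun.apply_symm_apply c'
  have hleft := eval_eq ((evalAt ⟨x, hx⟩).toLinearMap ∘ₗ (dirDeriv U w).toLinearMap) v i
  have hright := eval_eq (evalAt ⟨x, hx⟩).toLinearMap (b.equivFun.symm c') i
  rw [hv'] at hright
  exact hleft.trans ((congrFun hc' i).trans hright.symm)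

end AlmostEverywhere

section DifferentialIdeals

open TopologicalSpace

theorem eq_zero_of_linear_ode {F : Type*} [NormedAddCommGroup F] [NormedSpace ℝ F] {a b : ℝ}
    {V : ℝ → F} {Q : ℝ → F →L[ℝ] F} (hQ : ContinuousOn Q (Set.Icc a b))
    (hV : ∀ t ∈ Set.Icc a b, HasDerivAt V (Q t (V t)) t) (ha : V a = 0) :
    ∀ t ∈ Set.Icc a b, V t = 0 := by
  obtain ⟨M, hM⟩ := isCompact_Icc.exists_bound_of_continuousOn hQ
  refine eq_zero_of_abs_deriv_le_mul_abs_self_of_eq_zero_right (K := M)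
    (fun t ht => (hV t ht).continuousAt.continuousWithinAt)
    (fun t ht => (hV t ⟨ht.1, ht.2.le⟩).hasDerivWithinAt) ha fun t ht => ?_
  exact (Q t).le_of_opNorm_le (hM t ⟨ht.1, ht.2.le⟩) (V t)

variable {E : Type*} [NormedAddCommGroup E] [NormedSpace ℝ E] {U : Opens E}

theorem evalAt_eq_zero_of_segment {ι : Type*} [Fintype ι] {v : ι → smoothFunctions U}
    {C : Matrix ι ι (smoothFunctions U)} {y z : U} (hseg : segment ℝ (y : E) z ⊆ U)
    (hC : ∀ i, dirDeriv U (z - y : E) (v i) = ∑ j, C i j * v j)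
    (hy : ∀ i, evalAt y (v i) = 0) (i : ι) : evalAt z (v i) = 0 := by
  classical
  let γ : ℝ → E := AffineMap.lineMap (y : E) (z : E)
  have hγ : ∀ t ∈ Set.Icc (0 : ℝ) 1, γ t ∈ U := fun t ht =>
    hseg (segment_eq_image_lineMap ℝ (y : E) (z : E) ▸ Set.mem_image_of_mem γ ht)
  let V : ℝ → ι → ℝ := fun t i => zeroExtend (v i).1 (γ t)
  let Q : ℝ → Matrix ι ι ℝ := fun t => of fun i j => zeroExtend (C i j).1 (γ t)
  have hQ : ContinuousOn Q (Set.Icc 0 1) :=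
    continuousOn_pi.2 fun i => continuousOn_pi.2 fun j =>
      (C i j).2.continuousOn.comp AffineMap.lineMap_continuous.continuousOn hγ
  let toCLM : Matrix ι ι ℝ →ₗ[ℝ] (ι → ℝ) →L[ℝ] ι → ℝ :=
    LinearMap.toContinuousLinearMap.toLinearMap ∘ₗ toLin'.toLinearMap
  have hV : ∀ t ∈ Set.Icc (0 : ℝ) 1, HasDerivAt V (toCLM (Q t) (V t)) t := by
    refine fun t ht => hasDerivAt_pi.2 fun i => ?_
    refine ((differentiableAt_zeroExtend (v i) ⟨γ t, hγ t ht⟩).hasFDerivAt.comp_hasDerivAt t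
      AffineMap.hasDerivAt_lineMap).congr_deriv ?_
    rw [← evalAt_dirDeriv, hC, map_sum]
    refine Finset.sum_congr rfl fun j _ => ?_
    rw [map_mul, ← zeroExtend_eq_evalAt, ← zeroExtend_eq_evalAt]
    rfl
  have hV0 : V 0 = 0 := funext fun i => by
    simpa only [V, γ, AffineMap.lineMap_apply_zero, zeroExtend_eq_evalAt, Pi.zero_apply] using hy i
  have hV1 := eq_zero_of_linear_ode (toCLM.continuous_of_finiteDimensional.comp_continuousOn hQ)
    hV hV0 1 (Set.right_mem_Icc.2 zero_le_one)
  simpa only [V, γ, AffineMap.lineMap_apply_one, zeroExtend_eq_evalAt, Pi.zero_apply]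
    using congrFun hV1 i

theorem isClosed_forall_evalAt_eq_zero (S : Set (smoothFunctions U)) :
    IsClosed {x : U | ∀ f ∈ S, evalAt x f = 0} := by
  simp only [Set.ofPred_forall]
  refine isClosed_biInter fun f _ => isClosed_singleton.preimage (f := f.1) ?_
  exact continuous_iff_continuousAt.2 fun x =>
    ((differentiableAt_zeroExtend f x).continuousAt.comp continuousAt_subtype_val).congr
      (.of_forall fun y => zeroExtend_apply f.1 y)

theorem isOpen_forall_mem_evalAt_eq_zero {J : Ideal (smoothFunctions U)} (hfg : J.FG)
    (hJ : ∀ w, ∀ f ∈ J, dirDeriv U w f ∈ J) : IsOpen {x : U | ∀ f ∈ J, evalAt x f = 0} := by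
  obtain ⟨r, v, rfl⟩ := Submodule.fg_iff_exists_fin_generating_family.1 hfg
  have hv (i : Fin r) : v i ∈ Submodule.span (smoothFunctions U) (Set.range v) :=
    Submodule.subset_span ⟨i, rfl⟩
  refine Metric.isOpen_iff.2 fun y hy => ?_
  obtain ⟨ε, hε, hball⟩ := Metric.isOpen_iff.1 U.isOpen y y.2
  refine ⟨ε, hε, fun z hz f hf => ?_⟩
  have hseg : segment ℝ (y : E) z ⊆ U :=
    ((convex_ball (y : E) ε).segment_subset (Metric.mem_ball_self hε) hz).trans hball
  choose C hC using fun i =>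
    (Submodule.mem_span_range_iff_exists_fun _).1 (hJ (z - y : E) (v i) (hv i))
  have hz : ∀ i, evalAt z (v i) = 0 :=
    evalAt_eq_zero_of_segment hseg (C := C) (fun i => (hC i).symm) fun i => hy _ (hv i)
  exact (Submodule.span_le (p := RingHom.ker (evalAt z))).2 (Set.range_subset_iff.2 hz) hf

theorem evalAt_eq_zero_of_mem_differential_ideal [PreconnectedSpace U]
    {J : Ideal (smoothFunctions U)} (hfg : J.FG) (hJ : ∀ w, ∀ f ∈ J, dirDeriv U w f ∈ J) {x₁ : U}
    (h₁ : ∀ f ∈ J, evalAt x₁ f = 0) {f : smoothFunctions U} (hf : f ∈ J) (x : U) :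
    evalAt x f = 0 := by
  have hclopen : IsClopen {x : U | ∀ f ∈ J, evalAt x f = 0} :=
    ⟨isClosed_forall_evalAt_eq_zero (J : Set (smoothFunctions U)),
      isOpen_forall_mem_evalAt_eq_zero hfg hJ⟩
  exact (hclopen.eq_univ ⟨x₁, h₁⟩).symm.le (Set.mem_univ x) f hf

end DifferentialIdeals

section Prolongation

/-- The identity comes from inverting the adjacency matrix of the Petersen graph: `y a b c i j`
depends on the pair `{i, j}` among five indices, and the cyclic sums run over the three pairs
disjoint from a given one. -/
theorem eq_zero_of_symm_of_cyclic_sum_eq_zero {ι M : Type*} (k : Type*) [Field k] [CharZero k]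
    [AddCommGroup M] [Module k M] {y : ι → ι → ι → ι → ι → M}
    (h₁₂ : ∀ a b c i j, y a b c i j = y b a c i j) (h₂₃ : ∀ a b c i j, y a b c i j = y a c b i j)
    (hcyc : ∀ a b c i j, y a b c i j + y a b i c j + y a b j c i = 0) (a b c i j : ι) :
    y a b c i j = 0 := by
  have hij := hcyc i j a b c
  have hbc := hcyc b c a i j
  have hac := hcyc a c b i j
  have hab := hcyc a b c i j
  have hbj := hcyc b j a c i
  have haj := hcyc a j b c i
  have hcj := hcyc c j a b i
  have hbi := hcyc b i a c j
  have hai := hcyc a i b c j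
  have hci := hcyc c i a b j
  simp only [h₁₂, h₂₃] at hij hbc hac hab hbj haj hcj hbi hai hci ⊢
  linear_combination (norm := module) (1 / 3 : k) • (hbc + hac + hab + hij) -
    (1 / 6 : k) • (hbj + haj + hcj + hbi + hai + hci)

variable {R A : Type*} [CommRing R] [CommRing A] [Algebra R A]

/-- The ideal generated by `J` and the derivatives of its elements along `𝒟`. Iterating it is the
prolongation of a system of linear differential equations. -/
def prolong (𝒟 : Submodule A (Derivation R A A)) (J : Ideal A) : Ideal A :=
  J ⊔ Ideal.span {g | ∃ D ∈ 𝒟, ∃ f ∈ J, D f = g}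

variable {𝒟 : Submodule A (Derivation R A A)} {J : Ideal A}

theorem le_prolong : J ≤ prolong 𝒟 J :=
  le_sup_left

theorem apply_mem_prolong {D : Derivation R A A} (hD : D ∈ 𝒟) {f : A} (hf : f ∈ J) :
    D f ∈ prolong 𝒟 J :=
  Ideal.mem_sup_right (Ideal.subset_span ⟨D, hD, f, hf, rfl⟩)

theorem apply_mem_of_mem_span {𝒳 : Set (Derivation R A A)} {S : Set A} (hS : S ⊆ J)
    (h𝒳 : ∀ X ∈ 𝒳, ∀ s ∈ S, X s ∈ J) {D : Derivation R A A} (hD : D ∈ Submodule.span A 𝒳) {f : A}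
    (hf : f ∈ Ideal.span S) : D f ∈ J := by
  have hle : Ideal.span S ≤ J := Ideal.span_le.2 hS
  induction hD using Submodule.span_induction with
  | mem X hX =>
    induction hf using Submodule.span_induction with
    | mem s hs => exact h𝒳 X hX s hs
    | zero => simp
    | add f g _ _ hf hg => simpa using J.add_mem hf hg
    | smul a f hfS hf =>
      rw [smul_eq_mul, X.leibniz]
      exact J.add_mem (J.mul_mem_left a hf) (J.mul_mem_right _ (hle hfS))
  | zero => simp
  | add D D' _ _ hD hD' => exact J.add_mem hD hD'
  | smul a D _ hD => exact J.mul_mem_left a hD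

theorem prolong_span (𝒳 : Set (Derivation R A A)) (S : Set A) :
    prolong (Submodule.span A 𝒳) (Ideal.span S) =
      Ideal.span (S ∪ Set.image2 (fun X s => X s) 𝒳 S) := by
  refine le_antisymm (sup_le (Ideal.span_mono Set.subset_union_left) (Ideal.span_le.2 ?_))
    (Ideal.span_le.2 (Set.union_subset ?_ ?_))
  · rintro _ ⟨D, hD, f, hf, rfl⟩
    exact apply_mem_of_mem_span (fun s hs => Ideal.subset_span (.inl hs))
      (fun X hX s hs => Ideal.subset_span (.inr ⟨X, hX, s, hs, rfl⟩)) hD hf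
  · exact fun s hs => le_prolong (Ideal.subset_span hs)
  · rintro _ ⟨X, hX, s, hs, rfl⟩
    exact apply_mem_prolong (Submodule.subset_span hX) (Ideal.subset_span hs)

theorem prolong_fg (h𝒟 : 𝒟.FG) (hJ : J.FG) : (prolong 𝒟 J).FG := by
  obtain ⟨𝒳, rfl⟩ := h𝒟
  obtain ⟨S, rfl⟩ := hJ
  exact prolong_span (𝒳 : Set (Derivation R A A)) S ▸
    Submodule.fg_span (S.finite_toSet.union (𝒳.finite_toSet.image2 _ S.finite_toSet))

theorem lie_mem_span_of_lie_mem {𝒳 : Set (Derivation R A A)}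
    (h𝒳 : ∀ X ∈ 𝒳, ∀ Y ∈ 𝒳, ⁅X, Y⁆ ∈ Submodule.span A 𝒳) {D E : Derivation R A A}
    (hD : D ∈ Submodule.span A 𝒳) (hE : E ∈ Submodule.span A 𝒳) : ⁅D, E⁆ ∈ Submodule.span A 𝒳 := by
  have lie_mem {X : Derivation R A A} (hX : ∀ Y ∈ 𝒳, ⁅X, Y⁆ ∈ Submodule.span A 𝒳)
      {E : Derivation R A A} (hE : E ∈ Submodule.span A 𝒳) : ⁅X, E⁆ ∈ Submodule.span A 𝒳 := by
    induction hE using Submodule.span_induction with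
    | mem Y hY => exact hX Y hY
    | zero => simp
    | add E E' _ _ hE hE' => exact lie_add X E E' ▸ add_mem hE hE'
    | smul a E hE ih =>
      rw [LieRinehartRing.leibniz_smul_right]
      exact add_mem (Submodule.smul_mem _ _ ih) (Submodule.smul_mem _ _ hE)
  refine lie_mem (fun Y hY => ?_) hE
  rw [← lie_skew]
  exact neg_mem (lie_mem (h𝒳 Y hY) hD)

section KillingSystem

variable {ι k : Type*} [Field k] [CharZero k] [Algebra k A] {X : ι → Derivation k A A}
  {T : ι → ι → A} {𝒟 : Submodule A (Derivation k A A)} {J : Ideal A}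

theorem third_derivative_mem_prolong_prolong (hX : ∀ i, X i ∈ 𝒟)
    (hlie : ∀ D ∈ 𝒟, ∀ E ∈ 𝒟, ⁅D, E⁆ ∈ 𝒟) (hT : ∀ i j, T i j ∈ J)
    (hcyc : ∀ i j l, X i (T j l) + X j (T i l) + X l (T i j) ∈ J) (a b c i j : ι) :
    X a (X b (X c (T i j))) ∈ prolong 𝒟 (prolong 𝒟 J) := by
  rw [← Ideal.Quotient.eq_zero_iff_mem]
  refine eq_zero_of_symm_of_cyclic_sum_eq_zero k (y := fun a b c i j =>
    Ideal.Quotient.mk (prolong 𝒟 (prolong 𝒟 J)) (X a (X b (X c (T i j))))) ?_ ?_ ?_ a b c i j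
  · intro a b c i j
    rw [Ideal.Quotient.eq, ← Derivation.commutator_apply]
    exact apply_mem_prolong (hlie _ (hX a) _ (hX b)) (apply_mem_prolong (hX c) (hT i j))
  · intro a b c i j
    rw [Ideal.Quotient.eq, ← map_sub, ← Derivation.commutator_apply]
    exact apply_mem_prolong (hX a) (apply_mem_prolong (hlie _ (hX b) _ (hX c)) (hT i j))
  · intro a b c i j
    simp only [← map_add, Ideal.Quotient.eq_zero_iff_mem]
    exact apply_mem_prolong (hX a) (apply_mem_prolong (hX b) (hcyc c i j))

theorem apply_mem_prolong_prolong_of_mem (hX : Submodule.span A (Set.range X) = 𝒟)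
    (hlie : ∀ D ∈ 𝒟, ∀ E ∈ 𝒟, ⁅D, E⁆ ∈ 𝒟) (hT : Ideal.span (Set.range (Function.uncurry T)) = J)
    (hcyc : ∀ i j l, X i (T j l) + X j (T i l) + X l (T i j) ∈ J) {D : Derivation k A A}
    (hD : D ∈ 𝒟) {f : A} (hf : f ∈ prolong 𝒟 (prolong 𝒟 J)) : D f ∈ prolong 𝒟 (prolong 𝒟 J) := by
  have hXmem (i : ι) : X i ∈ 𝒟 := hX ▸ Submodule.subset_span ⟨i, rfl⟩
  have hTmem (i j : ι) : T i j ∈ J := hT ▸ Ideal.subset_span ⟨(i, j), rfl⟩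
  let S := Set.range (Function.uncurry T)
  have hspan := prolong_span (Set.range X) S
  have hspan₂ := prolong_span (Set.range X) (S ∪ Set.image2 (fun X s => X s) (Set.range X) S)
  rw [hX, hT] at hspan
  rw [hX, ← hspan] at hspan₂
  refine apply_mem_of_mem_span (hspan₂ ▸ Ideal.subset_span) ?_ (hX.ge hD) (hspan₂.le hf)
  rintro _ ⟨a, rfl⟩ g (hg | ⟨_, ⟨b, rfl⟩, g, hg, rfl⟩)
  · exact apply_mem_prolong (hXmem a) (hspan ▸ Ideal.subset_span hg)
  · obtain ⟨⟨i, j⟩, rfl⟩ | ⟨_, ⟨c, rfl⟩, _, ⟨⟨i, j⟩, rfl⟩, rfl⟩ := hg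
    · exact apply_mem_prolong (hXmem a) (apply_mem_prolong (hXmem b) (hTmem i j))
    · exact third_derivative_mem_prolong_prolong hXmem hlie hTmem hcyc a b c i j

end KillingSystem

end Prolongation

section CubicForms

/-- The sum of the three values of `w` obtained by moving each of the indices to the first place.
For `w` symmetric in its last two indices this is, up to a factor, its symmetrization. -/
def cyclicSum {ι M : Type*} [Add M] (w : ι → ι → ι → M) (i j l : ι) : M :=
  w i j l + w j i l + w l i j

variable {ι k : Type*} [Field k]

theorem sum_permutations_eq_zero_of_apply_self_eq_zero {V : Type*} [AddCommGroup V]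
    [Module k V] {F : V →ₗ[k] V →ₗ[k] V →ₗ[k] k}
    (hF : ∀ v, F v v v = 0) (u v w : V) :
    F u v w + F u w v + F v u w + F v w u + F w u v + F w v u = 0 := by
  have huv := hF (u + v)
  have huw := hF (u + w)
  have hvw := hF (v + w)
  have huvw := hF (u + v + w)
  simp only [map_add, LinearMap.add_apply] at huv huw hvw huvw
  linear_combination huvw - huv - huw - hvw + hF u + hF v + hF w

variable [Fintype ι]

theorem dotProduct_mulVec_self_of_isDiag {D : Matrix ι ι k} (hD : D.IsDiag) (q : ι → k) :
    q ⬝ᵥ D *ᵥ q = D.diag ⬝ᵥ q ^ 2 := by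
  classical
  obtain ⟨d, rfl⟩ : ∃ d, D = diagonal d := ⟨_, ((isDiag_iff_diagonal_diag D).1 hD).symm⟩
  simp only [dotProduct, mulVec_diagonal, diag_diagonal]
  exact Finset.sum_congr rfl fun j _ => by rw [Pi.pow_apply]; ring

variable [CharZero k] {w : ι → ι → ι → k}

theorem cyclicSum_eq_zero_of_cubicForm_eq_zero (hw : ∀ i j l, w i j l = w i l j)
    (h : ∀ p : ι → k, ∑ i, ∑ j, ∑ l, w i j l * p i * p j * p l = 0) (i j l : ι) :
    cyclicSum w i j l = 0 := by
  classical
  let coord (i : ι) : (ι → k) →ₗ[k] k := LinearMap.proj i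
  let F := ∑ i, ∑ j, ∑ l, w i j l • (coord i).smulRight ((coord j).smulRight (coord l))
  have F_apply (p q r : ι → k) : F p q r = ∑ i, ∑ j, ∑ l, w i j l * p i * q j * r l := by
    simp [F, coord, LinearMap.sum_apply, mul_assoc]
  have F_single (i j l : ι) : F (Pi.single i 1) (Pi.single j 1) (Pi.single l 1) = w i j l := by
    simp [F_apply, Pi.single_apply]
  have := sum_permutations_eq_zero_of_apply_self_eq_zero (fun p => (F_apply p p p).trans (h p))
    (Pi.single i 1) (Pi.single j 1) (Pi.single l 1)
  simp only [F_single] at this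
  unfold cyclicSum
  linear_combination (1 / 2 : k) * (this + hw i j l + hw j i l + hw l i j)

theorem cubicForm_eq_zero_of_cyclicSum_eq_zero (h : ∀ i j l, cyclicSum w i j l = 0) (p : ι → k) :
    ∑ i, ∑ j, ∑ l, w i j l * p i * p j * p l = 0 := by
  let c (i j l : ι) := w i j l * p i * p j * p l
  have hcyc (i j l : ι) : c i j l + c j i l + c l i j = 0 := by
    have := h i j l
    unfold cyclicSum at this
    linear_combination p i * p j * p l * this
  have hswap : ∑ i, ∑ j, ∑ l, c j i l = ∑ i, ∑ j, ∑ l, c i j l := Finset.sum_comm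
  have hrot : ∑ i, ∑ j, ∑ l, c l i j = ∑ i, ∑ j, ∑ l, c i j l :=
    (Finset.sum_congr rfl fun _ _ => Finset.sum_comm).trans Finset.sum_comm
  have hsum : ∑ i, ∑ j, ∑ l, (c i j l + c j i l + c l i j) = 0 := by
    simp only [hcyc, Finset.sum_const_zero]
  simp only [Finset.sum_add_distrib, hswap, hrot] at hsum
  linear_combination (1 / 3 : k) * hsum

theorem eq_zero_of_dotProduct_mulVec_sq_eq_zero {W : Matrix ι ι k}
    (h : ∀ q : ι → k, q ⬝ᵥ W *ᵥ (q ^ 2) = 0) : W = 0 := by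
  classical
  have hcyc := cyclicSum_eq_zero_of_cubicForm_eq_zero
    (w := fun i j l => if j = l then W i j else 0) (by grind) fun q => by
      refine Eq.trans ?_ (h q)
      simp only [dotProduct, mulVec, Finset.mul_sum, ite_mul, zero_mul, Finset.sum_ite_eq,
        Finset.mem_univ, if_true, Pi.pow_apply]
      exact Finset.sum_congr rfl fun i _ => Finset.sum_congr rfl fun j _ => by ring
  ext i j
  have hii := hcyc i i i
  have hij := hcyc i j j
  unfold cyclicSum at hii hij
  grind [Matrix.zero_apply]

theorem eq_zero_of_isDiag_of_cyclicSum_eq_zero [DecidableEq ι] {G B : Matrix ι ι k} (hG : IsUnit G)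
    (hB : IsUnit B) {S : ι → Matrix ι ι k} (hS : ∀ a, (B * S a * Bᵀ).IsDiag)
    (h : ∀ i j l, cyclicSum (fun i j l => ∑ a, G i a * S a j l) i j l = 0) (a : ι) : S a = 0 := by
  have hcubic (p : ι → k) : p ⬝ᵥ G *ᵥ (fun a => p ⬝ᵥ S a *ᵥ p) = 0 := by
    rw [← cubicForm_eq_zero_of_cyclicSum_eq_zero h p]
    simp only [dotProduct, mulVec, Finset.mul_sum, Finset.sum_mul]
    refine Finset.sum_congr rfl fun i _ => Finset.sum_comm_cycle.symm.trans ?_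
    exact Finset.sum_congr rfl fun j _ => Finset.sum_congr rfl fun l _ =>
      Finset.sum_congr rfl fun a _ => by ring
  have hdiag (q : ι → k) (a : ι) :
      q ᵥ* B ⬝ᵥ S a *ᵥ (q ᵥ* B) = (B * S a * Bᵀ).diag ⬝ᵥ q ^ 2 := by
    rw [← dotProduct_mulVec_self_of_isDiag (hS a), ← dotProduct_mulVec, ← mulVec_transpose,
      mulVec_mulVec, mulVec_mulVec, Matrix.mul_assoc]
  -- In the momenta `p = q ᵥ* B` the cubic form becomes `∑ Wᵢⱼ qᵢ qⱼ²`, for `W` the matrix below.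
  have hzero : B * G * of (fun a => (B * S a * Bᵀ).diag) = 0 := by
    refine eq_zero_of_dotProduct_mulVec_sq_eq_zero fun q => ?_
    rw [← hcubic (q ᵥ* B), funext (hdiag q), ← dotProduct_mulVec, mulVec_mulVec, ← mulVec_mulVec]
    rfl
  have hSa : B * S a * Bᵀ = 0 := by
    rw [← (isDiag_iff_diagonal_diag _).1 (hS a)]
    exact diagonal_eq_zero.2 (congrFun ((hB.mul hG).mul_right_eq_zero.1 hzero) a)
  exact hB.mul_right_eq_zero.1 (((isUnit_transpose B).2 hB).mul_left_eq_zero.1 hSa)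

end CubicForms

section KillingTensors

open TopologicalSpace

variable {ι : Type*} [Fintype ι] [DecidableEq ι] {U : Opens (ι → ℝ)}

/-- The partial derivative of smooth functions on `U` along the `a`-th coordinate. -/
noncomputable abbrev partialDeriv (U : Opens (ι → ℝ)) (a : ι) :
    Derivation ℝ (smoothFunctions U) (smoothFunctions U) :=
  dirDeriv U (Pi.single a 1)

/-- The vector field on `U` whose components are the `i`-th row of `M`. -/
noncomputable def rowDeriv (M : Matrix ι ι (smoothFunctions U)) (i : ι) :
    Derivation ℝ (smoothFunctions U) (smoothFunctions U) :=
  ∑ a, M i a • partialDeriv U a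

theorem rowDeriv_apply (M : Matrix ι ι (smoothFunctions U)) (i : ι) (f : smoothFunctions U) :
    rowDeriv M i f = ∑ a, M i a * partialDeriv U a f :=
  map_sum ((Pi.evalAddMonoidHom _ f).comp Derivation.coeFnAddMonoidHom) _ _

/-- The components of the Schouten bracket of two symmetric contravariant 2-tensors, up to a factor.
It is the tensor form of the Poisson bracket of the associated functions quadratic in the momenta.
-/
noncomputable def schoutenBracket (M N : Matrix ι ι (smoothFunctions U)) :
    ι → ι → ι → smoothFunctions U :=
  cyclicSum fun i j l => rowDeriv M i (N j l) - rowDeriv N i (M j l)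

variable {G : Matrix ι ι (smoothFunctions U)}

theorem schoutenBracket_add_right (M N N' : Matrix ι ι (smoothFunctions U)) :
    schoutenBracket M (N + N') = schoutenBracket M N + schoutenBracket M N' := by
  ext1; ext1; ext1
  simp only [schoutenBracket, cyclicSum, rowDeriv_apply, Pi.add_apply, Matrix.add_apply, add_mul,
    map_add, Finset.sum_add_distrib]
  ring

theorem schoutenBracket_smul_right (c : ℝ) (M N : Matrix ι ι (smoothFunctions U)) :
    schoutenBracket M (c • N) = c • schoutenBracket M N := by
  ext1; ext1; ext1
  simp only [schoutenBracket, cyclicSum, rowDeriv_apply, Pi.smul_apply, Matrix.smul_apply,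
    Derivation.map_smul, smul_mul_assoc, ← Finset.smul_sum, ← smul_sub, ← smul_add]

variable (G) in
/-- The contravariant Killing 2-tensors on `U` for the metric whose inverse is `G`. -/
noncomputable def killingTensors : Submodule ℝ (Matrix ι ι (smoothFunctions U)) where
  carrier := {T | T.IsSymm ∧ schoutenBracket G T = 0}
  zero_mem' := ⟨isSymm_zero, by simpa using schoutenBracket_smul_right 0 G 0⟩
  add_mem' hS hT := ⟨hS.1.add hT.1, by rw [schoutenBracket_add_right, hS.2, hT.2, add_zero]⟩
  smul_mem' c _ hT := ⟨hT.1.smul c, by rw [schoutenBracket_smul_right, hT.2, smul_zero]⟩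

theorem cyclicSum_rowDeriv_eq_of_mem_killingTensors {T : Matrix ι ι (smoothFunctions U)}
    (hT : T ∈ killingTensors G) (i j l : ι) :
    cyclicSum (fun i j l => rowDeriv G i (T j l)) i j l =
      cyclicSum (fun i j l => rowDeriv T i (G j l)) i j l := by
  have hbracket := congrFun₃ hT.2 i j l
  simp only [schoutenBracket, cyclicSum, Pi.zero_apply] at hbracket ⊢
  linear_combination hbracket

theorem cyclicSum_rowDeriv_mem_of_mem_killingTensors {T : Matrix ι ι (smoothFunctions U)}
    (hT : T ∈ killingTensors G) (i j l : ι) :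
    cyclicSum (fun i j l => rowDeriv G i (T j l)) i j l ∈
      Ideal.span (Set.range (Function.uncurry T)) := by
  have hrow (i j l : ι) : rowDeriv T i (G j l) ∈ Ideal.span (Set.range (Function.uncurry T)) := by
    rw [rowDeriv_apply]
    exact sum_mem fun a _ => Ideal.mul_mem_right _ _ (Ideal.subset_span ⟨(i, a), rfl⟩)
  rw [cyclicSum_rowDeriv_eq_of_mem_killingTensors hT]
  exact add_mem (add_mem (hrow i j l) (hrow j i l)) (hrow l i j)

theorem span_range_sum_smul_of_isUnit {A V : Type*} [CommRing A] [AddCommGroup V] [Module A V]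
    {M : Matrix ι ι A} (hM : IsUnit M) (v : ι → V) :
    Submodule.span A (Set.range fun i => ∑ a, M i a • v a) = Submodule.span A (Set.range v) := by
  refine le_antisymm (Submodule.span_le.2 ?_) (Submodule.span_le.2 ?_)
  · rintro _ ⟨i, rfl⟩
    exact sum_mem fun a _ => Submodule.smul_mem _ _ (Submodule.subset_span ⟨a, rfl⟩)
  · rintro _ ⟨b, rfl⟩
    obtain ⟨N, hN⟩ := hM.exists_left_inv
    have hv : v b = ∑ i, N b i • ∑ a, M i a • v a := by
      simp only [Finset.smul_sum, smul_smul]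
      rw [Finset.sum_comm]
      simp [← Finset.sum_smul, ← mul_apply, hN, one_apply]
    rw [hv]
    exact sum_mem fun i _ => Submodule.smul_mem _ _ (Submodule.subset_span ⟨i, rfl⟩)

variable (U) in
theorem dirDeriv_mem_span (w : ι → ℝ) : dirDeriv U w ∈ Submodule.span (smoothFunctions U)
    (Set.range (partialDeriv U)) := by
  rw [← Finset.univ_sum_single w, map_sum]
  refine sum_mem fun a _ => ?_
  have hsingle : Pi.single a (w a) = w a • Pi.single a (1 : ℝ) := by simp [← Pi.single_smul]
  rw [hsingle, map_smul]
  exact Submodule.smul_of_tower_mem _ _ (Submodule.subset_span ⟨a, rfl⟩)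

theorem eq_zero_of_mem_killingTensors [PreconnectedSpace U] (hG : IsUnit G)
    {T : Matrix ι ι (smoothFunctions U)} (hT : T ∈ killingTensors G) {x₁ : U}
    (h₀ : ∀ j l, evalAt x₁ (T j l) = 0)
    (h₁ : ∀ a j l, evalAt x₁ (partialDeriv U a (T j l)) = 0)
    (h₂ : ∀ a b j l, evalAt x₁ (partialDeriv U a (partialDeriv U b (T j l))) = 0) : T = 0 := by
  let 𝒟 := Submodule.span (smoothFunctions U) (Set.range (partialDeriv U))
  let J := Ideal.span (Set.range (Function.uncurry T))
  have hlie : ∀ D ∈ 𝒟, ∀ E ∈ 𝒟, ⁅D, E⁆ ∈ 𝒟 := fun D hD E hE => by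
    refine lie_mem_span_of_lie_mem ?_ hD hE
    rintro _ ⟨a, rfl⟩ _ ⟨b, rfl⟩
    exact lie_dirDeriv (U := U) _ _ ▸ zero_mem _
  have hker : prolong 𝒟 (prolong 𝒟 J) ≤ RingHom.ker (evalAt x₁) := by
    rw [prolong_span, prolong_span, Ideal.span_le]
    rintro _ ((⟨⟨j, l⟩, rfl⟩ | ⟨_, ⟨b, rfl⟩, _, ⟨⟨j, l⟩, rfl⟩, rfl⟩) |
      ⟨_, ⟨a, rfl⟩, _, ⟨⟨j, l⟩, rfl⟩ | ⟨_, ⟨b, rfl⟩, _, ⟨⟨j, l⟩, rfl⟩, rfl⟩, rfl⟩)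
    exacts [h₀ j l, h₁ _ j l, h₁ _ j l, h₂ _ _ j l]
  have hfg : (prolong 𝒟 (prolong 𝒟 J)).FG :=
    have h𝒟 : 𝒟.FG := Submodule.fg_span (Set.finite_range _)
    prolong_fg h𝒟 (prolong_fg h𝒟 (Submodule.fg_span (Set.finite_range _)))
  ext1 j l
  exact ext_evalAt <| evalAt_eq_zero_of_mem_differential_ideal hfg
    (fun w f hf => apply_mem_prolong_prolong_of_mem
      (span_range_sum_smul_of_isUnit hG (partialDeriv U)) hlie rfl
      (cyclicSum_rowDeriv_mem_of_mem_killingTensors hT) (dirDeriv_mem_span U w) hf)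
    hker (le_prolong (le_prolong (Ideal.subset_span ⟨(j, l), rfl⟩)))

theorem evalAt_partialDeriv_eq_zero_of_isDiag {T : Matrix ι ι (smoothFunctions U)}
    (hG : IsUnit G) (hT : T ∈ killingTensors G) {x : U} (hx : T.map (evalAt x) = 0)
    {B : Matrix ι ι ℝ} (hB : IsUnit B)
    (hdiag : ∀ a, (B * T.map (evalAt x ∘ partialDeriv U a) * Bᵀ).IsDiag) (a : ι) :
    T.map (evalAt x ∘ partialDeriv U a) = 0 := by
  have h₀ (j l : ι) : evalAt x (T j l) = 0 := congrFun₂ hx j l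
  refine eq_zero_of_isDiag_of_cyclicSum_eq_zero (hG.map (evalAt x).mapMatrix) hB hdiag ?_ a
  intro i j l
  have := congrArg (evalAt x) (cyclicSum_rowDeriv_eq_of_mem_killingTensors hT i j l)
  simpa [cyclicSum, rowDeriv_apply, h₀] using this

variable {μ : Measure (ι → ℝ)} [μ.IsAddHaarMeasure]

theorem ae_exists_map_evalAt_eq_partialDeriv (W : Submodule ℝ (Matrix ι ι (smoothFunctions U)))
    [FiniteDimensional ℝ W] (a : ι) : ∀ᵐ x ∂μ, ∀ hx : x ∈ U, ∀ T ∈ W,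
      T.map (evalAt ⟨x, hx⟩) = 0 → ∃ T' ∈ W,
        T.map (evalAt ⟨x, hx⟩ ∘ partialDeriv U a) = T'.map (evalAt ⟨x, hx⟩) := by
  let L : W →ₗ[ℝ] ι × ι → smoothFunctions U :=
    LinearMap.pi fun q => entryLinearMap ℝ _ q.1 q.2 ∘ₗ W.subtype
  filter_upwards [ae_exists_eval_eq_dirDeriv (μ := μ) (V := W) L (Pi.single a 1)]
    with x hae hx T hT h₀
  obtain ⟨T', hT'⟩ := hae hx ⟨T, hT⟩ fun q => congrFun₂ h₀ q.1 q.2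
  exact ⟨T', T'.2, ext fun i j => hT' (i, j)⟩

theorem ae_exists_jet_eq_partialDeriv (W : Submodule ℝ (Matrix ι ι (smoothFunctions U)))
    [FiniteDimensional ℝ W] (a : ι) : ∀ᵐ x ∂μ, ∀ hx : x ∈ U, ∀ T ∈ W,
      T.map (evalAt ⟨x, hx⟩) = 0 → (∀ b, T.map (evalAt ⟨x, hx⟩ ∘ partialDeriv U b) = 0) →
      ∃ T' ∈ W, T.map (evalAt ⟨x, hx⟩ ∘ partialDeriv U a) = T'.map (evalAt ⟨x, hx⟩) ∧
        ∀ b, T.map (evalAt ⟨x, hx⟩ ∘ partialDeriv U a ∘ partialDeriv U b) =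
          T'.map (evalAt ⟨x, hx⟩ ∘ partialDeriv U b) := by
  let L : W →ₗ[ℝ] Option ι × ι × ι → smoothFunctions U := LinearMap.pi fun q =>
    q.1.elim LinearMap.id (fun b => (partialDeriv U b).toLinearMap) ∘ₗ
      entryLinearMap ℝ _ q.2.1 q.2.2 ∘ₗ W.subtype
  filter_upwards [ae_exists_eval_eq_dirDeriv (μ := μ) (V := W) L (Pi.single a 1)]
    with x hae hx T hT h₀ h₁
  obtain ⟨T', hT'⟩ := hae hx ⟨T, hT⟩ fun
    | (none, i, j) => congrFun₂ h₀ i j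
    | (some b, i, j) => congrFun₂ (h₁ b) i j
  exact ⟨T', T'.2, ext fun i j => hT' (none, i, j), fun b => ext fun i j => hT' (some b, i, j)⟩

theorem ae_eq_zero_of_map_evalAt_eq_zero [PreconnectedSpace U] (hG : IsUnit G)
    {W : Submodule ℝ (Matrix ι ι (smoothFunctions U))} [FiniteDimensional ℝ W]
    (hW : W ≤ killingTensors G)
    (hdiag : ∀ᵐ x ∂μ, ∀ hx : x ∈ U, ∃ B : Matrix ι ι ℝ, IsUnit B ∧
      ∀ T ∈ W, (B * T.map (evalAt ⟨x, hx⟩) * Bᵀ).IsDiag) :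
    ∀ᵐ x ∂μ, ∀ hx : x ∈ U, ∀ T ∈ W, T.map (evalAt ⟨x, hx⟩) = 0 → T = 0 := by
  filter_upwards [hdiag, ae_all_iff.2 (ae_exists_map_evalAt_eq_partialDeriv W),
    ae_all_iff.2 (ae_exists_jet_eq_partialDeriv W)] with x hdiag hae₀ hae₁ hx T hT h₀
  obtain ⟨B, hB, hBdiag⟩ := hdiag hx
  have first_jet {T} (hT : T ∈ W) (h₀ : T.map (evalAt ⟨x, hx⟩) = 0) (a : ι) :
      T.map (evalAt ⟨x, hx⟩ ∘ partialDeriv U a) = 0 := by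
    refine evalAt_partialDeriv_eq_zero_of_isDiag hG (hW hT) h₀ hB (fun b => ?_) a
    obtain ⟨T', hT', h⟩ := hae₀ b hx T hT h₀
    exact h ▸ hBdiag T' hT'
  have second_jet (a b : ι) :
      T.map (evalAt ⟨x, hx⟩ ∘ partialDeriv U a ∘ partialDeriv U b) = 0 := by
    obtain ⟨T', hT', h₁, h₂⟩ := hae₁ a hx T hT h₀ (first_jet hT h₀)
    rw [h₂, first_jet hT' (h₁ ▸ first_jet hT h₀ a)]
  exact eq_zero_of_mem_killingTensors hG (hW hT) (congrFun₂ h₀)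
    (fun a => congrFun₂ (first_jet hT h₀ a)) (fun a b => congrFun₂ (second_jet a b))

end KillingTensors

section MomentumQuadratics

/-- The function on phase space, quadratic in the momenta, associated with a contravariant
2-tensor field. -/
def momentumQuadratic {ι : Type*} [Fintype ι] (K : (ι → ℝ) → Matrix ι ι ℝ)
    (z : (ι → ℝ) × (ι → ℝ)) : ℝ :=
  ∑ i, ∑ j, K z.1 i j * z.2 i * z.2 j

section Derivatives

variable {ι : Type*} [Fintype ι] {K : (ι → ℝ) → Matrix ι ι ℝ} {z : (ι → ℝ) × (ι → ℝ)}

/-- The `i`-th momentum coordinate on phase space. -/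
abbrev momentum (i : ι) : (ι → ℝ) × (ι → ℝ) →L[ℝ] ℝ :=
  (ContinuousLinearMap.proj i : (ι → ℝ) →L[ℝ] ℝ) ∘L .snd ℝ _ _

theorem hasFDerivAt_momentumQuadratic
    (hK : ∀ i j, DifferentiableAt ℝ (fun x => K x i j) z.1) :
    HasFDerivAt (momentumQuadratic K) (∑ i, ∑ j,
      ((K z.1 i j * z.2 i) • momentum j + z.2 j • (K z.1 i j • momentum i +
        z.2 i • (fderiv ℝ (fun x => K x i j) z.1 ∘L .fst ℝ _ _)))) z := by
  have hp (i : ι) : HasFDerivAt (fun z : (ι → ℝ) × (ι → ℝ) => z.2 i) (momentum i) z :=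
    (momentum i).hasFDerivAt
  have hq (i j : ι) : HasFDerivAt (fun z : (ι → ℝ) × (ι → ℝ) => K z.1 i j)
      (fderiv ℝ (fun x => K x i j) z.1 ∘L .fst ℝ _ _) z :=
    HasFDerivAt.comp z (hK i j).hasFDerivAt hasFDerivAt_fst
  exact .fun_sum fun i _ => .fun_sum fun j _ => ((hq i j).mul (hp i)).mul (hp j)

theorem fderiv_momentumQuadratic_position
    (hK : ∀ i j, DifferentiableAt ℝ (fun x => K x i j) z.1) (u : ι → ℝ) :
    fderiv ℝ (momentumQuadratic K) z (u, 0) =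
      ∑ i, ∑ j, fderiv ℝ (fun x => K x i j) z.1 u * z.2 i * z.2 j := by
  rw [(hasFDerivAt_momentumQuadratic hK).fderiv]
  simp only [_root_.sum_apply]
  refine Finset.sum_congr rfl fun i _ => Finset.sum_congr rfl fun j _ => ?_
  simp [mul_comm, mul_left_comm]

theorem fderiv_momentumQuadratic_momentum [DecidableEq ι]
    (hK : ∀ i j, DifferentiableAt ℝ (fun x => K x i j) z.1) (hsymm : (K z.1).IsSymm) (a : ι) :
    fderiv ℝ (momentumQuadratic K) z (0, Pi.single a 1) = 2 * ∑ i, K z.1 i a * z.2 i := by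
  have hswap : ∑ j, z.2 j * K z.1 a j = ∑ i, K z.1 i a * z.2 i :=
    Finset.sum_congr rfl fun j _ => by rw [hsymm.apply, mul_comm]
  rw [(hasFDerivAt_momentumQuadratic hK).fderiv]
  simp only [_root_.sum_apply, _root_.add_apply, _root_.smul_apply,
    ContinuousLinearMap.comp_apply, ContinuousLinearMap.coe_snd', ContinuousLinearMap.coe_fst',
    ContinuousLinearMap.proj_apply, map_zero, smul_eq_mul, Finset.sum_add_distrib]
  simp [Pi.single_apply, hswap, two_mul]

end Derivatives

variable {n : ℕ}

theorem poisson_const_mul_left (c : ℝ) (f h : (Fin n → ℝ) × (Fin n → ℝ) → ℝ)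
    (z : (Fin n → ℝ) × (Fin n → ℝ)) :
    poisson (fun y => c * f y) h z = c * poisson f h z := by
  have hf : fderiv ℝ (fun y => c * f y) z = c • fderiv ℝ f z :=
    congrFun (fderiv_const_smul_field c) z
  simp only [poisson, hf, _root_.smul_apply, smul_eq_mul, Finset.mul_sum]
  exact Finset.sum_congr rfl fun i _ => by ring

theorem sum_contract_mul_cubic {ι : Type*} [Fintype ι] (S : ι → ι → ℝ) (T : ι → ι → ι → ℝ)
    (p : ι → ℝ) :
    ∑ i, ∑ j, ∑ l, (∑ a, S i a * T a j l) * p i * p j * p l =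
      ∑ a, (∑ i, S i a * p i) * ∑ j, ∑ l, T a j l * p j * p l := by
  simp only [Finset.sum_mul]
  simp only [Finset.mul_sum]
  refine Eq.trans (Finset.sum_congr rfl fun i _ => Finset.sum_comm_cycle.trans ?_) Finset.sum_comm
  exact Finset.sum_congr rfl fun a _ => Finset.sum_congr rfl fun j _ =>
    Finset.sum_congr rfl fun l _ => by ring

theorem poisson_momentumQuadratic {M N : (Fin n → ℝ) → Matrix (Fin n) (Fin n) ℝ}
    {z : (Fin n → ℝ) × (Fin n → ℝ)}
    (hM : ∀ i j, DifferentiableAt ℝ (fun x => M x i j) z.1) (hMsymm : (M z.1).IsSymm)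
    (hN : ∀ i j, DifferentiableAt ℝ (fun x => N x i j) z.1) (hNsymm : (N z.1).IsSymm) :
    poisson (momentumQuadratic M) (momentumQuadratic N) z = -2 * ∑ i, ∑ j, ∑ l,
      (∑ a, (M z.1 i a * fderiv ℝ (fun x => N x j l) z.1 (Pi.single a 1) -
        N z.1 i a * fderiv ℝ (fun x => M x j l) z.1 (Pi.single a 1))) *
          z.2 i * z.2 j * z.2 l := by
  simp only [poisson, fderiv_momentumQuadratic_position hM, fderiv_momentumQuadratic_position hN,
    fderiv_momentumQuadratic_momentum hM hMsymm, fderiv_momentumQuadratic_momentum hN hNsymm]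
  simp only [Finset.sum_sub_distrib, sub_mul, sum_contract_mul_cubic (M z.1),
    sum_contract_mul_cubic (N z.1)]
  rw [← Finset.sum_sub_distrib, ← Finset.sum_sub_distrib, Finset.mul_sum]
  exact Finset.sum_congr rfl fun a _ => by ring

end MomentumQuadratics

section SmoothMatrices

open TopologicalSpace

variable {E : Type*} [NormedAddCommGroup E] [NormedSpace ℝ E] {U : Opens E} {ι : Type*}

theorem differentiableAt_of_contDiffOn {K : E → Matrix ι ι ℝ}
    (hK : ∀ i j, ContDiffOn ℝ (⊤ : ℕ∞) (fun x => K x i j) U) (i j : ι) (x : U) :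
    DifferentiableAt ℝ (fun y => K y i j) x :=
  ((hK i j).contDiffAt (U.isOpen.mem_nhds x.2)).differentiableAt (by simp)

variable {K : E → Matrix ι ι ℝ} (hK : ∀ i j, ContDiffOn ℝ (⊤ : ℕ∞) (fun x => K x i j) U)

/-- The restriction to `U` of a matrix-valued function smooth on `U`, as a matrix over the algebra
of smooth functions. -/
def smoothMatrix : Matrix ι ι (smoothFunctions U) :=
  of fun i j => ⟨fun x : U => K x i j, restrict_mem_smoothFunctions (hK i j)⟩

theorem evalAt_smoothMatrix (i j : ι) (x : U) : evalAt x (smoothMatrix hK i j) = K x i j :=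
  rfl

theorem evalAt_dirDeriv_smoothMatrix (w : E) (i j : ι) (x : U) :
    evalAt x (dirDeriv U w (smoothMatrix hK i j)) = fderiv ℝ (fun y => K y i j) x w :=
  DFunLike.congr_fun (fderiv_zeroExtend_congr (f := (smoothMatrix hK i j).1)
    (g := fun y => K y i j) (fun _ => rfl) x) w

end SmoothMatrices

section QuadraticIntegrals

open TopologicalSpace

theorem smoothMatrix_mem_killingTensors {n : ℕ} {U : Opens (Fin n → ℝ)}
    {M N : (Fin n → ℝ) → Matrix (Fin n) (Fin n) ℝ}
    (hM : ∀ i j, ContDiffOn ℝ (⊤ : ℕ∞) (fun x => M x i j) U) (hMsymm : ∀ x ∈ U, (M x).IsSymm)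
    (hN : ∀ i j, ContDiffOn ℝ (⊤ : ℕ∞) (fun x => N x i j) U) (hNsymm : ∀ x ∈ U, (N x).IsSymm)
    (h : ∀ z, z.1 ∈ U → poisson (momentumQuadratic M) (momentumQuadratic N) z = 0) :
    smoothMatrix hN ∈ killingTensors (smoothMatrix hM) := by
  have symm {K : (Fin n → ℝ) → Matrix (Fin n) (Fin n) ℝ}
      (hK : ∀ i j, ContDiffOn ℝ (⊤ : ℕ∞) (fun x => K x i j) U) (hKsymm : ∀ x ∈ U, (K x).IsSymm) :
      (smoothMatrix hK).IsSymm :=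
    IsSymm.ext fun i j => ext_evalAt fun x => (hKsymm x x.2).apply i j
  refine ⟨symm hN hNsymm, ?_⟩
  ext1 i; ext1 j; ext1 l
  refine ext_evalAt fun x => ?_
  let w (i j l : Fin n) := ∑ a, (M x i a * fderiv ℝ (fun y => N y j l) x (Pi.single a 1) -
    N x i a * fderiv ℝ (fun y => M y j l) x (Pi.single a 1))
  have hw (i j l : Fin n) : w i j l = evalAt x
      (rowDeriv (smoothMatrix hM) i (smoothMatrix hN j l) -
        rowDeriv (smoothMatrix hN) i (smoothMatrix hM j l)) := by
    simp [w, rowDeriv_apply, evalAt_dirDeriv_smoothMatrix, evalAt_smoothMatrix]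
  have hcubic (p : Fin n → ℝ) : ∑ i, ∑ j, ∑ l, w i j l * p i * p j * p l = 0 := by
    have := h (x, p) x.2
    rw [poisson_momentumQuadratic (differentiableAt_of_contDiffOn hM · · x) (hMsymm x x.2)
      (differentiableAt_of_contDiffOn hN · · x) (hNsymm x x.2)] at this
    simpa [w] using this
  have hbracket := cyclicSum_eq_zero_of_cubicForm_eq_zero (fun i j l => by
    rw [hw, hw, (symm hM hMsymm).apply j l, (symm hN hNsymm).apply j l]) hcubic i j l
  simpa [schoutenBracket, cyclicSum, hw] using hbracket

theorem eq_zero_of_sum_smul_eventuallyEq_zero {E F κ : Type*} [NormedAddCommGroup E]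
    [NormedSpace ℝ E] [NormedAddCommGroup F] [NormedSpace ℝ F] [Fintype κ] {f : κ → E → F} {z : E}
    (hf : ∀ α, DifferentiableAt ℝ (f α) z)
    (hli : LinearIndependent ℝ fun α => fderiv ℝ (f α) z) {c : κ → ℝ}
    (hc : (fun y => ∑ α, c α • f α y) =ᶠ[nhds z] 0) : c = 0 := by
  refine funext (Fintype.linearIndependent_iff.1 hli c ?_)
  have hsum := (HasFDerivAt.fun_sum (u := Finset.univ) fun α _ =>
    (hf α).hasFDerivAt.const_smul (c α)).fderiv
  exact hsum.symm.trans (hc.fderiv_eq.trans (congrFun fderiv_zero z))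

theorem linearIndependent_smoothMatrix {ι κ : Type*} [Fintype ι] [Finite κ] {U : Opens (ι → ℝ)}
    {K : κ → (ι → ℝ) → Matrix ι ι ℝ}
    (hK : ∀ α i j, ContDiffOn ℝ (⊤ : ℕ∞) (fun x => K α x i j) U)
    {z : (ι → ℝ) × (ι → ℝ)} (hz : z.1 ∈ U)
    (hli : LinearIndependent ℝ fun α => fderiv ℝ (momentumQuadratic (K α)) z) :
    LinearIndependent ℝ fun α => smoothMatrix (hK α) := by
  have := Fintype.ofFinite κ
  refine Fintype.linearIndependent_iff.2 fun c hc => congrFun ?_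
  refine eq_zero_of_sum_smul_eventuallyEq_zero (fun α => (hasFDerivAt_momentumQuadratic
    (differentiableAt_of_contDiffOn (hK α) · · ⟨z.1, hz⟩)).differentiableAt) hli ?_
  have hvanish (x : U) (i j : ι) : ∑ α, c α * K α x i j = 0 := by
    simpa [Matrix.sum_apply, evalAt_smoothMatrix] using congrArg (fun M => evalAt x (M i j)) hc
  filter_upwards [continuousAt_fst.preimage_mem_nhds (U.isOpen.mem_nhds hz)] with y hy
  calc ∑ α, c α • momentumQuadratic (K α) y
      = ∑ i, ∑ j, (∑ α, c α * K α y.1 i j) * y.2 i * y.2 j := by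
        simp only [momentumQuadratic, smul_eq_mul, Finset.mul_sum, Finset.sum_mul, mul_assoc]
        exact Finset.sum_comm.trans (Finset.sum_congr rfl fun i _ => Finset.sum_comm)
    _ = 0 := by simp [hvanish ⟨y.1, hy⟩]

theorem ae_linearIndependent_of_mem_killingTensors {ι κ : Type*} [Fintype ι] [DecidableEq ι]
    [Finite κ] {U : Opens (ι → ℝ)} [PreconnectedSpace U] {μ : Measure (ι → ℝ)} [μ.IsAddHaarMeasure]
    {G : Matrix ι ι (smoothFunctions U)} (hG : IsUnit G) {K : κ → (ι → ℝ) → Matrix ι ι ℝ}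
    (hK : ∀ α i j, ContDiffOn ℝ (⊤ : ℕ∞) (fun x => K α x i j) U)
    (hkilling : ∀ α, smoothMatrix (hK α) ∈ killingTensors G)
    (hli : LinearIndependent ℝ fun α => smoothMatrix (hK α))
    (hdiag : ∀ᵐ x ∂μ, x ∈ U → ∃ B : Matrix ι ι ℝ, IsUnit B ∧ ∀ α, (B * K α x * Bᵀ).IsDiag) :
    ∀ᵐ x ∂μ, x ∈ U → LinearIndependent ℝ fun α => K α x := by
  let W := Submodule.span ℝ (Set.range fun α => smoothMatrix (hK α))
  have hW : W ≤ killingTensors G := Submodule.span_le.2 (Set.range_subset_iff.2 hkilling)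
  have : FiniteDimensional ℝ W := FiniteDimensional.span_of_finite ℝ (Set.finite_range _)
  have hWdiag : ∀ᵐ x ∂μ, ∀ hx : x ∈ U, ∃ B : Matrix ι ι ℝ, IsUnit B ∧
      ∀ T ∈ W, (B * T.map (evalAt ⟨x, hx⟩) * Bᵀ).IsDiag := by
    filter_upwards [hdiag] with x hdiagx hx
    obtain ⟨B, hB, hBK⟩ := hdiagx hx
    refine ⟨B, hB, fun T hT => ?_⟩
    induction hT using Submodule.span_induction with
    | mem T hT =>
      obtain ⟨α, rfl⟩ := hT
      exact hBK α
    | zero => simp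
    | add S T _ _ hS hT =>
      simpa [Matrix.map_add, Matrix.mul_add, Matrix.add_mul] using hS.add hT
    | smul c T _ hT => simpa [Matrix.map_smul] using hT.smul c
  filter_upwards [ae_eq_zero_of_map_evalAt_eq_zero hG hW hWdiag] with x hinj hx
  refine hli.map (f := (evalAt ⟨x, hx⟩).toLinearMap.mapMatrix) ?_
  exact Submodule.disjoint_def.2 fun T hT hT0 => hinj hx T hT hT0

end QuadraticIntegrals

section Pencils

variable {ι k : Type*} [Field k]

theorem exists_div_ne_div_of_span_eq_top {κ : Type*} {D : κ → ι → k}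
    (hD : Submodule.span k (Set.range D) = ⊤) {g : ι → k} {i j : ι} (hi : g i ≠ 0) (hij : i ≠ j) :
    ∃ α, D α i / g i ≠ D α j / g j := by
  classical
  by_contra! heq
  let φ : (ι → k) →ₗ[k] k := (g i)⁻¹ • LinearMap.proj i - (g j)⁻¹ • LinearMap.proj j
  have hφ : φ = 0 := LinearMap.ext_on_range hD fun α => by
    simpa [φ, sub_eq_zero, div_eq_inv_mul] using heq α
  simpa [φ, hij, hij.symm, hi] using LinearMap.congr_fun hφ (Pi.single i 1)

variable [Fintype ι] [DecidableEq ι]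

/-- The matrix `M` has `n` pairwise distinct eigenvalues in the base field, `n` being its size. -/
def HasSimpleSpectrum (M : Matrix ι ι k) : Prop :=
  ∃ d : ι → k, Function.Injective d ∧ M.charpoly = ∏ i, (X - C (d i))

theorem hasSimpleSpectrum_iff_injective {M : Matrix ι ι k} {e : ι → k}
    (hM : M.charpoly = ∏ i, (X - C (e i))) : HasSimpleSpectrum M ↔ Function.Injective e := by
  refine ⟨?_, fun he => ⟨e, he, hM⟩⟩
  rintro ⟨d, hd, hMd⟩
  rwa [← separable_prod_X_sub_C_iff, ← hMd, hM, separable_prod_X_sub_C_iff] at hd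

theorem diag_ne_zero_of_congr_diagonal {B G : Matrix ι ι k} (hB : IsUnit B) (hG : IsUnit G)
    {g : ι → k} (hg : B * G * Bᵀ = diagonal g) (i : ι) : g i ≠ 0 := by
  have hunit : IsUnit (diagonal g) := hg ▸ (hB.mul hG).mul ((isUnit_transpose B).2 hB)
  exact (Pi.isUnit_iff.1 (isUnit_diagonal.1 hunit) i).ne_zero

theorem charpoly_mul_inv_of_congr_diagonal {B M G : Matrix ι ι k} (hB : IsUnit B) (hG : IsUnit G)
    {d g : ι → k} (hd : B * M * Bᵀ = diagonal d) (hg : B * G * Bᵀ = diagonal g) :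
    (M * G⁻¹).charpoly = ∏ i, (X - C (d i / g i)) := by
  have hBdet : IsUnit B.det := (isUnit_iff_isUnit_det B).1 hB
  have hBtdet : IsUnit Bᵀ.det := by rwa [det_transpose]
  have hsimilar : B * (M * G⁻¹) * B⁻¹ = diagonal fun i => d i / g i := calc
    B * (M * G⁻¹) * B⁻¹ = B * M * Bᵀ * (B * G * Bᵀ)⁻¹ := by
      simp only [Matrix.mul_inv_rev, Matrix.mul_assoc,
        mul_nonsing_inv_cancel_left _ _ hBtdet]
    _ = diagonal fun i => d i / g i := by
      have hinv : (diagonal g)⁻¹ = diagonal g⁻¹ := inv_eq_right_inv <| by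
        simp [diag_ne_zero_of_congr_diagonal hB hG hg]
      rw [hd, hg, hinv, diagonal_mul_diagonal]
      simp only [Pi.inv_apply, div_eq_mul_inv]
  rw [← charpoly_diagonal, ← hsimilar, charpoly_mul_comm _ B⁻¹,
    nonsing_inv_mul_cancel_left _ _ hBdet]

theorem setOf_injective_eq_iInter {α V β : Type*} (e : V → α → β) :
    {v | Function.Injective (e v)} =
      ⋂ q : {q : α × α // q.1 ≠ q.2}, {v | e v q.1.1 ≠ e v q.1.2} := by
  ext v
  simp only [Set.mem_ofPred_eq, Set.mem_iInter, Subtype.forall, Prod.forall]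
  exact ⟨fun h i j hij => h.ne hij, fun h i j => not_imp_not.1 (h i j)⟩

theorem isOpen_setOf_injective {α V β : Type*} [Finite α] [TopologicalSpace V] [TopologicalSpace β]
    [T2Space β] {e : V → α → β} (he : Continuous e) : IsOpen {v | Function.Injective (e v)} := by
  rw [setOf_injective_eq_iInter]
  exact isOpen_iInter_of_finite fun q =>
    isOpen_ne_fun ((continuous_apply q.1.1).comp he) ((continuous_apply q.1.2).comp he)

section Density

variable {V : Type*} [AddCommGroup V] [Module ℝ V] [TopologicalSpace V] [IsTopologicalAddGroup V]
  [ContinuousSMul ℝ V]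

theorem dense_setOf_apply_ne_zero {f : V →ₗ[ℝ] ℝ} (hf : f ≠ 0) : Dense {v | f v ≠ 0} := by
  refine interior_eq_empty_iff_dense_compl.1 (Set.not_nonempty_iff_eq_empty.1 fun hne => hf ?_)
  exact LinearMap.ker_eq_top.1 ((LinearMap.ker f).eq_top_of_nonempty_interior' hne)

theorem dense_setOf_injective {α : Type*} [Countable α] [BaireSpace V] {e : V →L[ℝ] α → ℝ}
    (he : Pairwise fun i j => ∃ v, e v i ≠ e v j) : Dense {v | Function.Injective (e v)} := by
  rw [setOf_injective_eq_iInter]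
  refine dense_iInter_of_isOpen (fun q => isOpen_ne_fun ((continuous_apply q.1.1).comp e.2)
    ((continuous_apply q.1.2).comp e.2)) fun ⟨(i, j), hij⟩ => ?_
  obtain ⟨v, hv⟩ := he hij
  let coord (i : α) : (α → ℝ) →ₗ[ℝ] ℝ := LinearMap.proj i
  let f := (coord i - coord j) ∘ₗ e.toLinearMap
  have hf : f ≠ 0 := fun hf => hv (sub_eq_zero.1 (LinearMap.congr_fun hf v))
  simpa [f, coord, sub_ne_zero] using dense_setOf_apply_ne_zero hf

end Density

theorem isOpen_and_dense_setOf_hasSimpleSpectrum {κ : Type*} [Fintype κ] {B G : Matrix ι ι ℝ}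
    (hB : IsUnit B) (hG : IsUnit G) {K : κ → Matrix ι ι ℝ} {g : ι → ℝ} {d : κ → ι → ℝ}
    (hg : B * G * Bᵀ = diagonal g) (hd : ∀ α, B * K α * Bᵀ = diagonal (d α))
    (hsep : Pairwise fun i j => ∃ α, d α i / g i ≠ d α j / g j) :
    IsOpen {c : κ → ℝ | HasSimpleSpectrum ((∑ α, c α • K α) * G⁻¹)} ∧
      Dense {c : κ → ℝ | HasSimpleSpectrum ((∑ α, c α • K α) * G⁻¹)} := by
  classical
  let e : (κ → ℝ) →L[ℝ] ι → ℝ :=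
    (Fintype.linearCombination ℝ fun α => d α / g).toContinuousLinearMap
  have e_apply (c : κ → ℝ) (i : ι) : e c i = (∑ α, c α • d α) i / g i := by
    simp [e, Fintype.linearCombination_apply, Finset.sum_div, mul_div_assoc]
  have hcongr (c : κ → ℝ) : B * (∑ α, c α • K α) * Bᵀ = diagonal (∑ α, c α • d α) := by
    rw [← diagonalAddMonoidHom_apply, map_sum]
    simp [Finset.mul_sum, Finset.sum_mul, hd, diagonal_smul]
  have hiff (c : κ → ℝ) : HasSimpleSpectrum ((∑ α, c α • K α) * G⁻¹) ↔ Function.Injective (e c) :=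
    hasSimpleSpectrum_iff_injective <| by
      simpa only [e_apply] using charpoly_mul_inv_of_congr_diagonal hB hG (hcongr c) hg
  simp only [hiff]
  refine ⟨isOpen_setOf_injective e.continuous, dense_setOf_injective fun i j hij => ?_⟩
  obtain ⟨α, hα⟩ := hsep hij
  exact ⟨Pi.single α 1, by simpa [e_apply, Pi.single_apply, ite_apply] using hα⟩

theorem span_range_eq_top_of_congr_diagonal {B : Matrix ι ι k} (hB : IsUnit B)
    {K : ι → Matrix ι ι k} {d : ι → ι → k} (hd : ∀ α, B * K α * Bᵀ = diagonal (d α))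
    (hK : LinearIndependent k K) : Submodule.span k (Set.range d) = ⊤ := by
  let congr : (ι → k) →ₗ[k] Matrix ι ι k :=
    LinearMap.mulLeft k B⁻¹ ∘ₗ LinearMap.mulRight k Bᵀ⁻¹ ∘ₗ diagonalLinearMap ι k k
  have hBdet : IsUnit B.det := (isUnit_iff_isUnit_det B).1 hB
  have hBtdet : IsUnit Bᵀ.det := by rwa [det_transpose]
  have hcongr : congr ∘ d = K := funext fun α => by
    simp [congr, ← hd, Matrix.mul_assoc, nonsing_inv_mul_cancel_left _ _ hBdet,
      mul_nonsing_inv _ hBtdet]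
  exact (LinearIndependent.of_comp congr (hcongr ▸ hK)).span_eq_top_of_card_eq_finrank'
    (Module.finrank_fintype_fun_eq_card k).symm

theorem isOpen_and_dense_setOf_hasSimpleSpectrum_of_linearIndependent {m : ℕ}
    {B : Matrix (Fin (m + 1)) (Fin (m + 1)) ℝ} (hB : IsUnit B)
    {K : Fin (m + 1) → Matrix (Fin (m + 1)) (Fin (m + 1)) ℝ} (hG : IsUnit (K 0))
    (hdiag : ∀ α, (B * K α * Bᵀ).IsDiag) (hK : LinearIndependent ℝ K) :
    IsOpen {c : Fin m → ℝ | HasSimpleSpectrum ((∑ β, c β • K β.succ) * (K 0)⁻¹)} ∧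
      Dense {c : Fin m → ℝ | HasSimpleSpectrum ((∑ β, c β • K β.succ) * (K 0)⁻¹)} := by
  have hd (α) : B * K α * Bᵀ = diagonal (B * K α * Bᵀ).diag :=
    ((isDiag_iff_diagonal_diag _).1 (hdiag α)).symm
  refine isOpen_and_dense_setOf_hasSimpleSpectrum hB hG (hd 0) (fun β => hd β.succ)
    fun i j hij => ?_
  have hne (i) : (B * K 0 * Bᵀ).diag i ≠ 0 := diag_ne_zero_of_congr_diagonal hB hG (hd 0) i
  obtain ⟨α, hα⟩ :=
    exists_div_ne_div_of_span_eq_top (span_range_eq_top_of_congr_diagonal hB hd hK) (hne i) hij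
  cases α using Fin.cases with
  | zero => exact absurd ((div_self (hne i)).trans (div_self (hne j)).symm) hα
  | succ β => exact ⟨β, hα⟩

end Pencils

/-- under the assumptions (1), (2), (3) on the quadratic integrals of the
geodesic flow (here `n = m + 1 ≥ 1` and `G = K 0`), for almost every `x ∈ U` the set of
coefficient vectors `(λ_2, …, λ_n) ∈ ℝ^{n-1}` such that the matrix
`(∑_{α=2}^n λ_α K_α(x)) · G(x)⁻¹` has `n` pairwise distinct real eigenvalues
(its characteristic polynomial has `n` distinct real roots) is open and dense. -/
theorem stmt1 (m : ℕ)
    (U : Set (Fin (m + 1) → ℝ)) (hUopen : IsOpen U) (hUconn : IsConnected U)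
    (K : Fin (m + 1) → (Fin (m + 1) → ℝ) → Matrix (Fin (m + 1)) (Fin (m + 1)) ℝ)
    (hKsmooth : ∀ α i j, ContDiffOn ℝ (⊤ : ℕ∞) (fun x => K α x i j) U)
    (hKsymm : ∀ α, ∀ x ∈ U, (K α x).IsSymm)
    (hGinv : ∀ x ∈ U, IsUnit (K 0 x))
    (I : Fin (m + 1) → (Fin (m + 1) → ℝ) × (Fin (m + 1) → ℝ) → ℝ)
    (hI : ∀ α, I α = fun z =>
      ∑ i : Fin (m + 1), ∑ j : Fin (m + 1), K α z.1 i j * z.2 i * z.2 j)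
    (H : (Fin (m + 1) → ℝ) × (Fin (m + 1) → ℝ) → ℝ)
    (hH : H = fun z => (1 / 2 : ℝ) * I 0 z)
    -- (1) each `I α` is an integral of the geodesic flow
    (h1 : ∀ α, ∀ z : (Fin (m + 1) → ℝ) × (Fin (m + 1) → ℝ), z.1 ∈ U →
      poisson H (I α) z = 0)
    -- (2) simultaneous diagonalisability at almost every point
    (h2 : ∀ᵐ x ∂(volume : Measure (Fin (m + 1) → ℝ)), x ∈ U →
      ∃ B : Matrix (Fin (m + 1)) (Fin (m + 1)) ℝ, IsUnit B ∧
        ∀ α, (B * K α x * Bᵀ).IsDiag)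
    -- (3) the differentials of the integrals are linearly independent at some point
    (h3 : ∃ z : (Fin (m + 1) → ℝ) × (Fin (m + 1) → ℝ), z.1 ∈ U ∧
      LinearIndependent ℝ (fun α => fderiv ℝ (I α) z)) :
    ∀ᵐ x ∂(volume : Measure (Fin (m + 1) → ℝ)), x ∈ U →
      (IsOpen {lam : Fin m → ℝ |
          ∃ d : Fin (m + 1) → ℝ, Function.Injective d ∧
            ((∑ β : Fin m, lam β • K β.succ x) * (K 0 x)⁻¹).charpoly
              = ∏ i : Fin (m + 1), (X - C (d i))} ∧
        Dense {lam : Fin m → ℝ |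
          ∃ d : Fin (m + 1) → ℝ, Function.Injective d ∧
            ((∑ β : Fin m, lam β • K β.succ x) * (K 0 x)⁻¹).charpoly
              = ∏ i : Fin (m + 1), (X - C (d i))}) := by
  obtain rfl : I = fun α => momentumQuadratic (K α) := funext hI
  subst hH
  lift U to TopologicalSpace.Opens (Fin (m + 1) → ℝ) using hUopen
  have : PreconnectedSpace U := Subtype.preconnectedSpace hUconn.isPreconnected
  have hG : IsUnit (smoothMatrix (hKsmooth 0)) := isUnit_of_isUnit_map_evalAt fun x => hGinv x x.2
  have hkilling (α) : smoothMatrix (hKsmooth α) ∈ killingTensors (smoothMatrix (hKsmooth 0)) :=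
    smoothMatrix_mem_killingTensors (hKsmooth 0) (hKsymm 0) (hKsmooth α) (hKsymm α) fun z hz => by
      simpa [poisson_const_mul_left] using h1 α z hz
  obtain ⟨z, hz, hdI⟩ := h3
  have hK := linearIndependent_smoothMatrix hKsmooth hz hdI
  have hKx := ae_linearIndependent_of_mem_killingTensors hG hKsmooth hkilling hK h2
  filter_upwards [h2, hKx] with x hdiag hKx hx
  obtain ⟨B, hB, hBK⟩ := hdiag hx
  exact isOpen_and_dense_setOf_hasSimpleSpectrum_of_linearIndependent hB (K := (K · x))
    (hGinv x hx) hBK (hKx hx)
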